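/- Let A, B, C ⊂ ℝ be compact sets with dim_H(A) + dim_H(B) + dim_H(C) > 2. Then the set A(B+C) = { a(b+c) : a ∈ A, b ∈ B, c ∈ C } ⊂ ℝ has positive one-dimensional Lebesgue measure. -/

import Mathlib

open MeasureTheory
open scoped ENNReal

open ProbabilityTheory Set Filter Metric
open scoped NNReal Topology Pointwise

/-! Take Frostman measures `μ`, `ν`, `τ` on `A` (minus a small ball about `0`), `B`, `C`, of
exponents `α`, `β`, `γ` with `α + β + γ > 2`. The measure `μ ∗ₘ (ν ∗ τ)` lives on `A(B + C)`, and
its characteristic function at `ξ` is `∫ ν̂(aξ) τ̂(aξ) dμ(a)`. By Cauchy–Schwarz its square is at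
most `(∫ |ν̂(aξ)|² dμ(a)) (∫ |τ̂(aξ)|² dμ(a))`. As `ν` is compactly supported, `ν̂` is essentially
constant at unit scale, so for `|ξ| ≥ 1` the Frostman condition on `μ` compares the first factor
with `|ξ| ^ (1 - α)` times the mean of `|ν̂|²` over an interval of length about `|ξ|`, which is
`O(|ξ| ^ (-β))`. The integral of the second factor over `|ξ| ≤ R` is `O(R ^ (1 - γ))`, because `a`
stays away from `0`. Summing over dyadic shells, the product is integrable since
`(1 - α - β) + (1 - γ) < 0`, and a finite measure with square-integrable characteristic function is
absolutely continuous. -/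

section HausdorffContent

/-- The `s`-dimensional Hausdorff content: the outer measure whose value at `t` is the infimum of
`∑ diam (u i) ^ s` over all countable covers `u` of `t`, with no restriction on the diameters. -/
noncomputable def hausdorffContent {X : Type*} [PseudoEMetricSpace X] (s : ℝ) : OuterMeasure X :=
  OuterMeasure.boundedBy fun t => ediam t ^ s

theorem hausdorffContent_le {X : Type*} [PseudoEMetricSpace X] (s : ℝ) (t : Set X) :
    hausdorffContent s t ≤ ediam t ^ s :=
  OuterMeasure.boundedBy_le t

theorem hausdorffContent_ne_top {X : Type*} [PseudoMetricSpace X] {s : ℝ} (hs : 0 ≤ s) {t : Set X}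
    (ht : Bornology.IsBounded t) : hausdorffContent s t ≠ ∞ :=
  ne_top_of_le_ne_top (ENNReal.rpow_ne_top_of_nonneg hs ht.ediam_ne_top) (hausdorffContent_le s t)

theorem hausdorffMeasure_eq_zero_of_hausdorffContent_eq_zero {X : Type*} [EMetricSpace X]
    [MeasurableSpace X] [BorelSpace X] {s : ℝ} (hs : 0 < s) {t : Set X}
    (ht : hausdorffContent s t = 0) : μH[s] t = 0 := by
  rw [Measure.hausdorffMeasure_apply]
  simp only [ENNReal.iSup_eq_zero]
  refine fun r hr => le_antisymm (le_of_forall_gt fun ε hε => ?_) zero_le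
  -- A cover of total weight below `r ^ s` automatically consists of sets of diameter at most `r`.
  have hlt : hausdorffContent s t < min ε (r ^ s) :=
    ht ▸ lt_min hε (ENNReal.rpow_pos_of_nonneg hr hs.le)
  simp only [hausdorffContent, OuterMeasure.boundedBy_apply, iInf_lt_iff] at hlt
  obtain ⟨u, htu, hu⟩ := hlt
  have hdiam (n : ℕ) : ediam (u n) ≤ r := by
    rcases (u n).eq_empty_or_nonempty with hn | hn
    · simp [hn]
    · rw [← ENNReal.rpow_le_rpow_iff hs]
      calc ediam (u n) ^ s = ⨆ _ : (u n).Nonempty, ediam (u n) ^ s := by simp [hn]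
        _ ≤ ∑' k, ⨆ _ : (u k).Nonempty, ediam (u k) ^ s :=
          ENNReal.le_tsum (f := fun k => ⨆ _ : (u k).Nonempty, ediam (u k) ^ s) n
        _ ≤ r ^ s := hu.le.trans (min_le_right _ _)
  exact (iInf₂_le_of_le u htu (iInf_le _ hdiam)).trans_lt (hu.trans_le (min_le_left _ _))

end HausdorffContent

section Frostman

/-- A measure is `s`-Frostman if balls of radius `r` have mass `O(r ^ s)`, uniformly in the
centre. -/
def IsFrostman {X : Type*} [PseudoMetricSpace X] [MeasurableSpace X] (μ : Measure X) (s : ℝ) :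
    Prop :=
  ∃ C : ℝ≥0, ∀ (x : X) (r : ℝ≥0), r ≠ 0 → μ (closedBall x r) ≤ C * (r : ℝ≥0∞) ^ s

theorem IsFrostman.isFiniteMeasure {X : Type*} [PseudoMetricSpace X] [MeasurableSpace X]
    {μ : Measure X} {s : ℝ} (hμ : IsFrostman μ s) {K : Set X} (hK : Bornology.IsBounded K)
    (hμK : ∀ᵐ x ∂μ, x ∈ K) : IsFiniteMeasure μ := by
  obtain ⟨C, hC⟩ := hμ
  rcases isEmpty_or_nonempty X with hX | ⟨⟨x⟩⟩
  · exact ⟨by simp [univ_eq_empty_iff.2 hX]⟩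
  obtain ⟨r, hr⟩ := hK.subset_closedBall x
  have hr' : r ≤ (r.toNNReal + 1 : ℝ≥0) := by
    push_cast
    linarith [Real.le_coe_toNNReal r]
  refine ⟨?_⟩
  calc μ univ ≤ μ (closedBall x (r.toNNReal + 1 : ℝ≥0)) :=
        measure_mono_ae (hμK.mono fun y hy _ => closedBall_subset_closedBall hr' (hr hy))
    _ ≤ C * ((r.toNNReal + 1 : ℝ≥0) : ℝ≥0∞) ^ s := hC x _ (by positivity)
    _ < ∞ := ENNReal.mul_lt_top ENNReal.coe_lt_top
        (ENNReal.rpow_ne_top_of_ne_zero (by positivity) ENNReal.coe_ne_top).lt_top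

variable {s : ℝ} {K : Set ℝ}

theorem hausdorffContent_inter_Iic_le_add (s : ℝ) (K : Set ℝ) {x y : ℝ} (hxy : x ≤ y) :
    hausdorffContent s (K ∩ Iic y)
      ≤ hausdorffContent s (K ∩ Iic x) + hausdorffContent s (K ∩ Ioc x y) := by
  rw [← Iic_union_Ioc_eq_Iic hxy, inter_union_distrib_left]
  exact measure_union_le _ _

theorem hausdorffContent_inter_Ioc_le (s : ℝ) (K : Set ℝ) (x y : ℝ) :
    hausdorffContent s (K ∩ Ioc x y) ≤ ENNReal.ofReal (y - x) ^ s :=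
  Real.ediam_Ioc x y ▸ (measure_mono inter_subset_right).trans (hausdorffContent_le s _)

/-- The distribution function `x ↦ H (K ∩ (-∞, x])` of the Hausdorff content `H` on a bounded set
`K`. On the line, its Lebesgue–Stieltjes measure is the measure of Frostman's lemma. -/
noncomputable def contentStieltjes (hs : 0 < s) (hK : Bornology.IsBounded K) :
    StieltjesFunction ℝ where
  toFun x := (hausdorffContent s (K ∩ Iic x)).toReal
  mono' x y hxy := ENNReal.toReal_mono (hausdorffContent_ne_top hs.le (hK.subset inter_subset_left))
    (measure_mono (inter_subset_inter_right _ (Iic_subset_Iic.2 hxy)))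
  right_continuous' x := by
    have hfin (z : ℝ) : hausdorffContent s (K ∩ Iic z) ≠ ∞ :=
      hausdorffContent_ne_top hs.le (hK.subset inter_subset_left)
    refine (ENNReal.continuousAt_toReal (hfin x)).tendsto.comp ?_
    have hlim : Tendsto (fun y => hausdorffContent s (K ∩ Iic x) + ENNReal.ofReal (y - x) ^ s)
        (𝓝[≥] x) (𝓝 (hausdorffContent s (K ∩ Iic x))) := by
      have : Continuous fun y =>
          hausdorffContent s (K ∩ Iic x) + ENNReal.ofReal (y - x) ^ s :=
        continuous_const.add (ENNReal.continuous_rpow_const.comp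
          (ENNReal.continuous_ofReal.comp (continuous_id.sub continuous_const)))
      simpa [hs] using this.continuousWithinAt.tendsto (x := x) (s := Ici x)
    refine tendsto_of_tendsto_of_tendsto_of_le_of_le' tendsto_const_nhds hlim ?_ ?_
    all_goals filter_upwards [self_mem_nhdsWithin] with y hxy
    · exact measure_mono (inter_subset_inter_right _ (Iic_subset_Iic.2 hxy))
    · exact (hausdorffContent_inter_Iic_le_add s K hxy).trans
        (add_le_add_right (hausdorffContent_inter_Ioc_le s K x y) _)

variable (hs : 0 < s) (hK : Bornology.IsBounded K)

theorem contentStieltjes_apply (x : ℝ) :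
    contentStieltjes hs hK x = (hausdorffContent s (K ∩ Iic x)).toReal :=
  rfl

theorem contentStieltjes_measure_Ioc_le (x y : ℝ) :
    (contentStieltjes hs hK).measure (Ioc x y) ≤ hausdorffContent s (K ∩ Ioc x y) := by
  rcases le_total y x with hyx | hxy
  · simp [Ioc_eq_empty_of_le hyx]
  have hfin (z : ℝ) : hausdorffContent s (K ∩ Iic z) ≠ ∞ :=
    hausdorffContent_ne_top hs.le (hK.subset inter_subset_left)
  rw [StieltjesFunction.measure_Ioc, contentStieltjes_apply, contentStieltjes_apply,
    ENNReal.ofReal_sub _ ENNReal.toReal_nonneg, ENNReal.ofReal_toReal (hfin y),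
    ENNReal.ofReal_toReal (hfin x), tsub_le_iff_left]
  exact hausdorffContent_inter_Iic_le_add s K hxy

theorem ae_mem_contentStieltjes_measure (hKc : IsClosed K) :
    ∀ᵐ x ∂(contentStieltjes hs hK).measure, x ∈ K := by
  refine measure_null_of_locally_null _ fun x hx => ?_
  obtain ⟨a, b, hab, hKab⟩ :=
    mem_nhds_iff_exists_Ioo_subset.1 (hKc.isOpen_compl.mem_nhds hx)
  obtain ⟨c, hxc, hcb⟩ := exists_between hab.2
  refine ⟨Ioc a c, mem_nhdsWithin_of_mem_nhds (Ioc_mem_nhds hab.1 hxc), le_antisymm ?_ zero_le⟩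
  have hempty : K ∩ Ioc a c = ∅ := (disjoint_compl_right.mono_right
    ((Ioc_subset_Ioo_right hcb).trans hKab)).inter_eq
  simpa [hempty] using contentStieltjes_measure_Ioc_le hs hK a c

theorem isFrostman_contentStieltjes_measure : IsFrostman (contentStieltjes hs hK).measure s := by
  refine ⟨3 ^ s, fun x r hr => ?_⟩
  have hr' : (0 : ℝ) < r := by positivity
  calc (contentStieltjes hs hK).measure (closedBall x r)
      ≤ (contentStieltjes hs hK).measure (Ioc (x - 2 * r) (x + r)) := by
        rw [Real.closedBall_eq_Icc]
        exact measure_mono (Icc_subset_Ioc (by linarith) le_rfl)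
    _ ≤ ENNReal.ofReal (x + r - (x - 2 * r)) ^ s :=
        (contentStieltjes_measure_Ioc_le hs hK _ _).trans (hausdorffContent_inter_Ioc_le s K _ _)
    _ = ((3 * r : ℝ≥0) : ℝ≥0∞) ^ s := by
        rw [show x + r - (x - 2 * r) = (3 * r : ℝ≥0) by push_cast; ring, ENNReal.ofReal_coe_nnreal]
    _ = (3 ^ s : ℝ≥0) * (r : ℝ≥0∞) ^ s := by
        rw [ENNReal.coe_mul, ENNReal.mul_rpow_of_nonneg _ _ hs.le,
          ENNReal.coe_rpow_of_nonneg _ hs.le]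

theorem contentStieltjes_measure_ne_zero (hpos : hausdorffContent s K ≠ 0) :
    (contentStieltjes hs hK).measure ≠ 0 := by
  obtain ⟨L, hL⟩ := hK.subset_closedBall 0
  rw [Real.closedBall_eq_Icc] at hL
  have hleft : K ∩ Iic (0 - L - 1) = ∅ := by
    refine eq_empty_of_forall_notMem fun y hy => ?_
    linarith [(hL hy.1).1, mem_Iic.1 hy.2]
  have hright : K ∩ Iic (0 + L) = K := inter_eq_left.2 (hL.trans Icc_subset_Iic_self)
  have hmass : (contentStieltjes hs hK).measure (Ioc (0 - L - 1) (0 + L))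
      = hausdorffContent s K := by
    rw [StieltjesFunction.measure_Ioc, contentStieltjes_apply, contentStieltjes_apply, hleft,
      hright, measure_empty, ENNReal.toReal_zero, sub_zero,
      ENNReal.ofReal_toReal (hausdorffContent_ne_top hs.le hK)]
  exact fun hzero => hpos (by simpa [hzero] using hmass.symm)

theorem exists_isFrostman_of_lt_dimH {s : ℝ≥0} (hs : 0 < s) {K : Set ℝ} (hK : IsCompact K)
    (hdim : s < dimH K) :
    ∃ μ : Measure ℝ, IsFiniteMeasure μ ∧ μ ≠ 0 ∧ (∀ᵐ x ∂μ, x ∈ K) ∧ IsFrostman μ s := by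
  have hs' : (0 : ℝ) < s := NNReal.coe_pos.2 hs
  have hfrost := isFrostman_contentStieltjes_measure hs' hK.isBounded
  have hsupp := ae_mem_contentStieltjes_measure hs' hK.isBounded hK.isClosed
  have hpos : hausdorffContent s K ≠ 0 := fun h => by
    simpa [hausdorffMeasure_of_lt_dimH hdim] using
      hausdorffMeasure_eq_zero_of_hausdorffContent_eq_zero hs' h
  exact ⟨_, hfrost.isFiniteMeasure hK.isBounded hsupp,
    contentStieltjes_measure_ne_zero hs' hK.isBounded hpos, hsupp, hfrost⟩

end Frostman

section Kernel

theorem summable_exp_neg_mul_add_one_rpow (s : ℝ) :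
    Summable fun n : ℕ => Real.exp (-n) * (n + 1 : ℝ) ^ s := by
  have hshift : Summable fun n : ℕ =>
      Real.exp 1 * ((↑(n + 1) : ℝ) ^ ⌈s⌉₊ * Real.exp (-1 * ↑(n + 1))) :=
    ((summable_nat_add_iff 1).2 (Real.summable_pow_mul_exp_neg_nat_mul ⌈s⌉₊ one_pos)).mul_left _
  refine hshift.of_nonneg_of_le (fun n => by positivity) fun n => ?_
  calc Real.exp (-n) * (n + 1 : ℝ) ^ s
      ≤ Real.exp (-n) * (n + 1 : ℝ) ^ (⌈s⌉₊ : ℝ) := by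
        gcongr
        exacts [le_add_of_nonneg_left n.cast_nonneg, Nat.le_ceil s]
    _ = Real.exp 1 * ((↑(n + 1) : ℝ) ^ ⌈s⌉₊ * Real.exp (-1 * ↑(n + 1))) := by
        rw [Real.rpow_natCast, mul_left_comm, ← Real.exp_add, mul_comm]
        push_cast
        ring_nf

theorem ofReal_exp_neg_mul_dist_le_tsum {X : Type*} [PseudoMetricSpace X] {R : ℝ≥0} (hR : R ≠ 0)
    (x y : X) :
    ENNReal.ofReal (Real.exp (-(R * dist x y))) ≤ ∑' n : ℕ,
      (closedBall x ((n + 1) / R : ℝ≥0)).indicator (fun _ => ENNReal.ofReal (Real.exp (-n))) y := by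
  have hR' : (0 : ℝ) < R := NNReal.coe_pos.2 hR.bot_lt
  set n := ⌊R * dist x y⌋₊
  have hmem : y ∈ closedBall x ((n + 1) / R : ℝ≥0) := by
    rw [mem_closedBall, dist_comm]
    push_cast
    rw [le_div_iff₀' hR']
    exact (Nat.lt_floor_add_one _).le
  calc ENNReal.ofReal (Real.exp (-(R * dist x y))) ≤ ENNReal.ofReal (Real.exp (-n)) := by
        gcongr
        exact Nat.floor_le (by positivity)
    _ = (closedBall x ((n + 1) / R : ℝ≥0)).indicator
          (fun _ => ENNReal.ofReal (Real.exp (-n))) y := (indicator_of_mem hmem fun _ => _).symm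
    _ ≤ _ := ENNReal.le_tsum (f := fun n : ℕ => (closedBall x ((n + 1) / R : ℝ≥0)).indicator
          (fun _ => ENNReal.ofReal (Real.exp (-n))) y) n

theorem IsFrostman.lintegral_exp_neg_mul_dist_le {X : Type*} [PseudoMetricSpace X]
    [MeasurableSpace X] [OpensMeasurableSpace X] {μ : Measure X} {s : ℝ} (hμ : IsFrostman μ s) :
    ∃ K : ℝ≥0, ∀ R : ℝ≥0, R ≠ 0 → ∀ x,
      ∫⁻ y, ENNReal.ofReal (Real.exp (-(R * dist x y))) ∂μ ≤ K * (R : ℝ≥0∞) ^ (-s) := by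
  obtain ⟨C, hC⟩ := hμ
  lift ∑' n : ℕ, ENNReal.ofReal (Real.exp (-n) * (n + 1 : ℝ) ^ s) to ℝ≥0 using
    (summable_exp_neg_mul_add_one_rpow s).tsum_ofReal_ne_top with S hS
  refine ⟨S * C, fun R hR x => ?_⟩
  have hball (n : ℕ) : μ (closedBall x ((n + 1) / R : ℝ≥0))
      ≤ ENNReal.ofReal ((n + 1 : ℝ) ^ s) * (C * (R : ℝ≥0∞) ^ (-s)) := by
    refine (hC x _ (by positivity)).trans_eq ?_
    rw [← ENNReal.coe_rpow_of_ne_zero (by positivity), ← ENNReal.coe_rpow_of_ne_zero hR,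
      div_eq_mul_inv, NNReal.mul_rpow, NNReal.inv_rpow, ← NNReal.rpow_neg, ENNReal.coe_mul,
      ENNReal.ofReal, Real.toNNReal_rpow_of_nonneg (by positivity),
      show (n + 1 : ℝ).toNNReal = n + 1 by simp]
    exact mul_left_comm _ _ _
  calc ∫⁻ y, ENNReal.ofReal (Real.exp (-(R * dist x y))) ∂μ
      ≤ ∫⁻ y, ∑' n : ℕ, (closedBall x ((n + 1) / R : ℝ≥0)).indicator
          (fun _ => ENNReal.ofReal (Real.exp (-n))) y ∂μ :=
        lintegral_mono fun y => ofReal_exp_neg_mul_dist_le_tsum hR x y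
    _ = ∑' n : ℕ, ENNReal.ofReal (Real.exp (-n)) * μ (closedBall x ((n + 1) / R : ℝ≥0)) := by
        rw [lintegral_tsum fun n =>
          (measurable_const.indicator measurableSet_closedBall).aemeasurable]
        simp only [lintegral_indicator_const measurableSet_closedBall]
    _ ≤ ∑' n : ℕ, ENNReal.ofReal (Real.exp (-n) * (n + 1 : ℝ) ^ s) * (C * (R : ℝ≥0∞) ^ (-s)) := by
        refine ENNReal.tsum_le_tsum fun n => ?_
        rw [ENNReal.ofReal_mul (Real.exp_nonneg _), mul_assoc]
        gcongr
        exact hball n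
    _ = (S * C : ℝ≥0) * (R : ℝ≥0∞) ^ (-s) := by
        rw [ENNReal.tsum_mul_right, ← hS, ENNReal.coe_mul, mul_assoc]

theorem IsFrostman.lintegral_gaussian_le {X : Type*} [PseudoMetricSpace X]
    [MeasurableSpace X] [OpensMeasurableSpace X] {μ : Measure X} {s : ℝ} (hμ : IsFrostman μ s) :
    ∃ K : ℝ≥0, ∀ R : ℝ≥0, R ≠ 0 → ∀ x,
      ∫⁻ y, ENNReal.ofReal (Real.exp (-(R * dist x y) ^ 2 / 4)) ∂μ ≤ K * (R : ℝ≥0∞) ^ (-s) := by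
  obtain ⟨K, hK⟩ := hμ.lintegral_exp_neg_mul_dist_le
  refine ⟨(Real.exp 1).toNNReal * K, fun R hR x => ?_⟩
  calc ∫⁻ y, ENNReal.ofReal (Real.exp (-(R * dist x y) ^ 2 / 4)) ∂μ
      ≤ ∫⁻ y, ENNReal.ofReal (Real.exp 1) * ENNReal.ofReal (Real.exp (-(R * dist x y))) ∂μ := by
        refine lintegral_mono fun y => ?_
        rw [← ENNReal.ofReal_mul (Real.exp_nonneg _), ← Real.exp_add]
        gcongr
        nlinarith [sq_nonneg (R * dist x y - 2)]
    _ ≤ ENNReal.ofReal (Real.exp 1) * (K * (R : ℝ≥0∞) ^ (-s)) := by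
        rw [lintegral_const_mul' _ _ ENNReal.ofReal_ne_top]
        gcongr
        exact hK R hR x
    _ = ((Real.exp 1).toNNReal * K : ℝ≥0) * (R : ℝ≥0∞) ^ (-s) := by
        rw [ENNReal.coe_mul, mul_assoc, ENNReal.ofReal]

end Kernel

section CharFun

theorem integral_charFun_comm {E : Type*} [NormedAddCommGroup E] [InnerProductSpace ℝ E]
    [MeasurableSpace E] [OpensMeasurableSpace E] [SecondCountableTopology E] (μ ν : Measure E)
    [IsFiniteMeasure μ] [IsFiniteMeasure ν] :
    ∫ t, charFun μ t ∂ν = ∫ x, charFun ν x ∂μ := by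
  simp only [charFun_apply]
  rw [integral_integral_swap]
  · simp only [real_inner_comm]
  · refine Integrable.of_bound (Measurable.aestronglyMeasurable (by fun_prop)) 1
      (ae_of_all _ fun p => ?_)
    exact (Complex.norm_exp_ofReal_mul_I _).le

theorem charFun_conv_map_neg {E : Type*} [NormedAddCommGroup E] [InnerProductSpace ℝ E]
    [MeasurableSpace E] [BorelSpace E] [SecondCountableTopology E] (μ : Measure E)
    [IsFiniteMeasure μ] (t : E) :
    charFun (μ ∗ μ.map Neg.neg) t = ((‖charFun μ t‖ ^ 2 : ℝ) : ℂ) := by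
  rw [charFun_conv, show (Neg.neg : E → E) = ((-1 : ℝ) • ·) by ext; simp, charFun_map_smul,
    neg_one_smul, charFun_neg, Complex.mul_conj, Complex.normSq_eq_norm_sq]

theorem lintegral_sq_enorm_charFun_gaussianReal (μ : Measure ℝ) [IsFiniteMeasure μ] (v : ℝ≥0) :
    ∫⁻ t, ‖charFun μ t‖ₑ ^ 2 ∂gaussianReal 0 v
      = ∫⁻ x, ∫⁻ y, ENNReal.ofReal (Real.exp (-(v * (x - y) ^ 2) / 2)) ∂μ ∂μ := by
  have hint : Integrable (fun t => ‖charFun μ t‖ ^ 2) (gaussianReal 0 v) :=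
    .of_bound (by fun_prop) (μ.real univ ^ 2) (ae_of_all _ fun t => by
      simpa using pow_le_pow_left₀ (norm_nonneg _) (norm_charFun_le t) 2)
  have hint' : Integrable (fun z => Real.exp (-(v * z ^ 2) / 2)) (μ ∗ μ.map Neg.neg) :=
    .of_bound (by fun_prop) 1 (ae_of_all _ fun z => by
      rw [Real.norm_of_nonneg (Real.exp_nonneg _), Real.exp_le_one_iff]
      linarith [mul_nonneg v.coe_nonneg (sq_nonneg z)])
  have hkey : ∫ t, ‖charFun μ t‖ ^ 2 ∂gaussianReal 0 v
      = ∫ z, Real.exp (-(v * z ^ 2) / 2) ∂(μ ∗ μ.map Neg.neg) := by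
    have := integral_charFun_comm (μ ∗ μ.map Neg.neg) (gaussianReal 0 v)
    simp only [charFun_conv_map_neg, charFun_gaussianReal] at this
    rw [← Complex.ofReal_inj, ← integral_complex_ofReal, ← integral_complex_ofReal, this]
    push_cast
    simp [neg_div]
  calc ∫⁻ t, ‖charFun μ t‖ₑ ^ 2 ∂gaussianReal 0 v
      = ENNReal.ofReal (∫ t, ‖charFun μ t‖ ^ 2 ∂gaussianReal 0 v) := by
        rw [ofReal_integral_eq_lintegral_ofReal hint (ae_of_all _ fun t => by positivity)]
        simp only [ENNReal.ofReal_pow (norm_nonneg _), ofReal_norm]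
    _ = ∫⁻ z, ENNReal.ofReal (Real.exp (-(v * z ^ 2) / 2)) ∂(μ ∗ μ.map Neg.neg) := by
        rw [hkey, ofReal_integral_eq_lintegral_ofReal hint' (ae_of_all _ fun z => by positivity)]
    _ = ∫⁻ x, ∫⁻ y, ENNReal.ofReal (Real.exp (-(v * (x - y) ^ 2) / 2)) ∂μ ∂μ := by
        rw [Measure.lintegral_conv (by fun_prop)]
        refine lintegral_congr fun x => ?_
        rw [lintegral_map (by fun_prop) measurable_neg]
        simp only [sub_eq_add_neg]

theorem IsFrostman.lintegral_sq_enorm_charFun_gaussianReal_le {μ : Measure ℝ} [IsFiniteMeasure μ]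
    {s : ℝ} (hμ : IsFrostman μ s) :
    ∃ K : ℝ≥0, ∀ R : ℝ≥0, R ≠ 0 →
      ∫⁻ t, ‖charFun μ t‖ₑ ^ 2 ∂gaussianReal 0 (R ^ 2) ≤ K * (R : ℝ≥0∞) ^ (-s) := by
  obtain ⟨K, hK⟩ := hμ.lintegral_gaussian_le
  refine ⟨K * (μ univ).toNNReal, fun R hR => ?_⟩
  calc ∫⁻ t, ‖charFun μ t‖ₑ ^ 2 ∂gaussianReal 0 (R ^ 2)
      = ∫⁻ x, ∫⁻ y, ENNReal.ofReal (Real.exp (-((R ^ 2 : ℝ≥0) * (x - y) ^ 2) / 2)) ∂μ ∂μ :=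
        lintegral_sq_enorm_charFun_gaussianReal μ (R ^ 2)
    _ ≤ ∫⁻ x, ∫⁻ y, ENNReal.ofReal (Real.exp (-(R * dist x y) ^ 2 / 4)) ∂μ ∂μ := by
        refine lintegral_mono fun x => lintegral_mono fun y => ?_
        refine ENNReal.ofReal_le_ofReal (Real.exp_le_exp.2 ?_)
        rw [Real.dist_eq, mul_pow, sq_abs, NNReal.coe_pow]
        linarith [mul_nonneg (sq_nonneg (R : ℝ)) (sq_nonneg (x - y))]
    _ ≤ ∫⁻ _, K * (R : ℝ≥0∞) ^ (-s) ∂μ := lintegral_mono fun x => hK R hR x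
    _ = (K * (μ univ).toNNReal : ℝ≥0) * (R : ℝ≥0∞) ^ (-s) := by
        rw [lintegral_const, ENNReal.coe_mul, ENNReal.coe_toNNReal (measure_ne_top _ _)]
        ring

end CharFun

section Dilates

theorem IsFrostman.of_le_smul {X : Type*} [PseudoMetricSpace X] [MeasurableSpace X]
    {μ ν : Measure X} {s : ℝ} (hμ : IsFrostman μ s) {c : ℝ≥0} (hν : ν ≤ c • μ) :
    IsFrostman ν s := by
  obtain ⟨C, hC⟩ := hμ
  refine ⟨c * C, fun x r hr => (hν _).trans ?_⟩
  rw [Measure.smul_apply, ENNReal.smul_def, smul_eq_mul, ENNReal.coe_mul, mul_assoc]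
  gcongr
  exact hC x r hr

-- Regularity of `charFun ν` at unit scale: the Gaussian factor `exp (-y ^ 2 / 2)` produced by
-- averaging the characteristic function is undone by the density, which is bounded when `ν` has
-- bounded support.
theorem charFun_eq_integral_charFun_withDensity (ν : Measure ℝ) [SFinite ν]
    [IsFiniteMeasure (ν.withDensity fun y => ENNReal.ofReal (Real.exp (y ^ 2 / 2)))] (x : ℝ) :
    charFun ν x = ∫ u, charFun (ν.withDensity fun y => ENNReal.ofReal (Real.exp (y ^ 2 / 2))) u
      ∂gaussianReal x 1 := by
  rw [integral_charFun_comm, integral_withDensity_eq_integral_toReal_smul (by fun_prop)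
    (ae_of_all _ fun _ => ENNReal.ofReal_lt_top), charFun_apply_real]
  refine integral_congr_ae (ae_of_all _ fun y => ?_)
  dsimp only
  rw [ENNReal.toReal_ofReal (Real.exp_nonneg _), charFun_gaussianReal, Complex.real_smul,
    Complex.ofReal_exp, ← Complex.exp_add]
  push_cast
  ring_nf

theorem sq_lintegral_mul_le {α : Type*} [MeasurableSpace α] {μ : Measure α} {f g : α → ℝ≥0∞}
    (hf : AEMeasurable f μ) (hg : AEMeasurable g μ) :
    (∫⁻ x, f x * g x ∂μ) ^ 2 ≤ (∫⁻ x, f x ^ 2 ∂μ) * ∫⁻ x, g x ^ 2 ∂μ := by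
  have hsqrt (c : ℝ≥0∞) : (c ^ (1 / 2 : ℝ)) ^ 2 = c := by
    rw [← ENNReal.rpow_natCast, ← ENNReal.rpow_mul]
    norm_num
  have holder := ENNReal.lintegral_mul_le_Lp_mul_Lq μ Real.HolderConjugate.two_two hf hg
  simp only [ENNReal.rpow_two] at holder
  simpa only [mul_pow, hsqrt, Pi.mul_apply] using pow_le_pow_left' holder 2

theorem sq_enorm_charFun_le_lintegral_gaussianReal (ν : Measure ℝ) [SFinite ν]
    [IsFiniteMeasure (ν.withDensity fun y => ENNReal.ofReal (Real.exp (y ^ 2 / 2)))] (x : ℝ) :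
    ‖charFun ν x‖ₑ ^ 2 ≤
      ∫⁻ u, ‖charFun (ν.withDensity fun y => ENNReal.ofReal (Real.exp (y ^ 2 / 2))) u‖ₑ ^ 2
        ∂gaussianReal x 1 := by
  rw [charFun_eq_integral_charFun_withDensity ν x]
  refine (pow_le_pow_left' (enorm_integral_le_lintegral_enorm _) 2).trans ?_
  simpa using sq_lintegral_mul_le (μ := gaussianReal x 1) measurable_charFun.enorm.aemeasurable
    (aemeasurable_const (b := 1))

theorem sq_div_le_sq_sub_mul_add_sq {L a ξ : ℝ} (ha : |a| ≤ L) (hξ : 1 ≤ |ξ|) (u : ℝ) :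
    u ^ 2 / (2 * (2 * |ξ|) ^ 2) ≤ (u - a * ξ) ^ 2 / 4 + L ^ 2 / 4 := by
  have ha2 : a ^ 2 ≤ L ^ 2 := sq_le_sq' (abs_le.1 ha).1 (abs_le.1 ha).2
  have hξ2 : 1 ≤ ξ ^ 2 := sq_abs ξ ▸ one_le_pow₀ hξ
  rw [mul_pow, sq_abs, div_le_iff₀ (by positivity)]
  nlinarith [sq_nonneg (u - 2 * (a * ξ)), mul_nonneg (sq_nonneg (u - a * ξ)) (sub_nonneg.2 hξ2),
    mul_nonneg (sq_nonneg ξ) (sub_nonneg.2 ha2)]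

theorem lintegral_gaussianReal (m : ℝ) {v : ℝ≥0} (hv : v ≠ 0) {f : ℝ → ℝ≥0∞}
    (hf : Measurable f) : ∫⁻ x, f x ∂gaussianReal m v = ∫⁻ x, gaussianPDF m v x * f x := by
  rw [gaussianReal_of_var_ne_zero m hv,
    lintegral_withDensity_eq_lintegral_mul _ (measurable_gaussianPDF m v) hf]
  rfl

theorem gaussianPDF_mul_le {L a ξ : ℝ} (ha : |a| ≤ L) (hξ : 1 ≤ |ξ|) (u : ℝ) :
    gaussianPDF (a * ξ) 1 u ≤ ENNReal.ofReal (2 * Real.exp (L ^ 2 / 4)) * ‖ξ‖ₑ *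
      gaussianPDF 0 ((2 * ‖ξ‖₊) ^ 2) u *
        ENNReal.ofReal (Real.exp (-(‖ξ‖₊ * dist (u / ξ) a) ^ 2 / 4)) := by
  have hξ0 : ξ ≠ 0 := abs_pos.1 (one_pos.trans_le hξ)
  have hdist : ‖ξ‖₊ * dist (u / ξ) a = |u - a * ξ| := by
    rw [coe_nnnorm, Real.norm_eq_abs, Real.dist_eq, ← abs_mul]
    congr 1
    field_simp
  have hsqrt : √(2 * Real.pi * ((2 * ‖ξ‖₊) ^ 2 : ℝ≥0)) = √(2 * Real.pi) * (2 * |ξ|) := by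
    rw [Real.sqrt_mul (by positivity)]
    push_cast
    rw [Real.sqrt_sq (by positivity), Real.norm_eq_abs]
  rw [gaussianPDF, gaussianPDF, gaussianPDFReal, gaussianPDFReal, ← ofReal_norm, Real.norm_eq_abs,
    ← ENNReal.ofReal_mul (by positivity), ← ENNReal.ofReal_mul (by positivity),
    ← ENNReal.ofReal_mul (by positivity), hdist, sq_abs, hsqrt]
  refine ENNReal.ofReal_le_ofReal ?_
  push_cast
  rw [mul_one, mul_one, sub_zero, Real.norm_eq_abs]
  calc (√(2 * Real.pi))⁻¹ * Real.exp (-(u - a * ξ) ^ 2 / 2)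
      ≤ (√(2 * Real.pi))⁻¹ * Real.exp (L ^ 2 / 4 +
          (-u ^ 2 / (2 * (2 * |ξ|) ^ 2) + -(u - a * ξ) ^ 2 / 4)) := by
        gcongr
        rw [neg_div, neg_div, neg_div]
        linarith [sq_div_le_sq_sub_mul_add_sq ha hξ u]
    _ = _ := by
        rw [Real.exp_add, Real.exp_add]
        field_simp

theorem IsFrostman.lintegral_gaussianPDF_mul_le {μ : Measure ℝ} {s : ℝ} (hμ : IsFrostman μ s)
    {L : ℝ} (hL : ∀ᵐ a ∂μ, |a| ≤ L) :
    ∃ K : ℝ≥0, ∀ ξ : ℝ, 1 ≤ |ξ| → ∀ u, ∫⁻ a, gaussianPDF (a * ξ) 1 u ∂μ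
      ≤ K * ‖ξ‖ₑ ^ (1 - s) * gaussianPDF 0 ((2 * ‖ξ‖₊) ^ 2) u := by
  obtain ⟨K, hK⟩ := hμ.lintegral_gaussian_le
  refine ⟨(2 * Real.exp (L ^ 2 / 4)).toNNReal * K, fun ξ hξ u => ?_⟩
  have hξ0 : ξ ≠ 0 := abs_pos.1 (one_pos.trans_le hξ)
  set c := ENNReal.ofReal (2 * Real.exp (L ^ 2 / 4)) with hc
  calc ∫⁻ a, gaussianPDF (a * ξ) 1 u ∂μ
      ≤ ∫⁻ a, c * ‖ξ‖ₑ * gaussianPDF 0 ((2 * ‖ξ‖₊) ^ 2) u *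
          ENNReal.ofReal (Real.exp (-(‖ξ‖₊ * dist (u / ξ) a) ^ 2 / 4)) ∂μ :=
        lintegral_mono_ae (hL.mono fun a ha => gaussianPDF_mul_le ha hξ u)
    _ ≤ c * ‖ξ‖ₑ * gaussianPDF 0 ((2 * ‖ξ‖₊) ^ 2) u * (K * ‖ξ‖ₑ ^ (-s)) := by
        rw [lintegral_const_mul _ (by fun_prop)]
        gcongr
        exact hK ‖ξ‖₊ (nnnorm_ne_zero_iff.2 hξ0) (u / ξ)
    _ = ((2 * Real.exp (L ^ 2 / 4)).toNNReal * K : ℝ≥0) * ‖ξ‖ₑ ^ (1 - s) *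
          gaussianPDF 0 ((2 * ‖ξ‖₊) ^ 2) u := by
        rw [sub_eq_add_neg, ENNReal.rpow_add _ _ (enorm_ne_zero.2 hξ0) enorm_ne_top,
          ENNReal.rpow_one, ENNReal.coe_mul, hc, ENNReal.ofReal]
        ring

theorem IsFrostman.lintegral_lintegral_gaussianReal_mul_le {μ : Measure ℝ} [SFinite μ] {s : ℝ}
    (hμ : IsFrostman μ s) {L : ℝ} (hL : ∀ᵐ a ∂μ, |a| ≤ L) :
    ∃ K : ℝ≥0, ∀ ξ : ℝ, 1 ≤ |ξ| → ∀ f : ℝ → ℝ≥0∞, Measurable f →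
      ∫⁻ a, ∫⁻ u, f u ∂gaussianReal (a * ξ) 1 ∂μ
        ≤ K * ‖ξ‖ₑ ^ (1 - s) * ∫⁻ u, f u ∂gaussianReal 0 ((2 * ‖ξ‖₊) ^ 2) := by
  obtain ⟨K, hK⟩ := hμ.lintegral_gaussianPDF_mul_le hL
  refine ⟨K, fun ξ hξ f hf => ?_⟩
  have hξ0 : ‖ξ‖₊ ≠ 0 := nnnorm_ne_zero_iff.2 (abs_pos.1 (one_pos.trans_le hξ))
  have : Measurable fun p : ℝ × ℝ => gaussianPDF (p.1 * ξ) 1 p.2 :=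
    measurable_uncurry_gaussianPDF.comp
      (by fun_prop : Measurable fun p : ℝ × ℝ => (p.1 * ξ, (1 : ℝ≥0), p.2))
  calc ∫⁻ a, ∫⁻ u, f u ∂gaussianReal (a * ξ) 1 ∂μ
      = ∫⁻ a, ∫⁻ u, gaussianPDF (a * ξ) 1 u * f u ∂volume ∂μ := by
        simp only [lintegral_gaussianReal _ one_ne_zero hf]
    _ = ∫⁻ u, (∫⁻ a, gaussianPDF (a * ξ) 1 u ∂μ) * f u := by
        rw [lintegral_lintegral_swap (by fun_prop)]
        exact lintegral_congr fun u => lintegral_mul_const _ (by fun_prop)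
    _ ≤ ∫⁻ u, K * ‖ξ‖ₑ ^ (1 - s) * (gaussianPDF 0 ((2 * ‖ξ‖₊) ^ 2) u * f u) :=
        lintegral_mono fun u => (mul_le_mul_left (hK ξ hξ u) _).trans_eq (mul_assoc _ _ _)
    _ = K * ‖ξ‖ₑ ^ (1 - s) * ∫⁻ u, f u ∂gaussianReal 0 ((2 * ‖ξ‖₊) ^ 2) := by
        rw [lintegral_const_mul _ (by fun_prop), lintegral_gaussianReal _ (by positivity) hf]

theorem IsFrostman.lintegral_sq_enorm_charFun_mul_le {μ ν : Measure ℝ} [SFinite μ]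
    [IsFiniteMeasure ν] {s t : ℝ} (hμ : IsFrostman μ s) (hν : IsFrostman ν t) {L M : ℝ}
    (hL : ∀ᵐ a ∂μ, |a| ≤ L) (hM : ∀ᵐ y ∂ν, |y| ≤ M) :
    ∃ K : ℝ≥0, ∀ ξ : ℝ, 1 ≤ |ξ| →
      ∫⁻ a, ‖charFun ν (a * ξ)‖ₑ ^ 2 ∂μ ≤ K * ‖ξ‖ₑ ^ (1 - s - t) := by
  set ν₁ := ν.withDensity fun y => ENNReal.ofReal (Real.exp (y ^ 2 / 2))
  have hle : ν₁ ≤ (Real.exp (M ^ 2 / 2)).toNNReal • ν := by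
    rw [← Measure.coe_nnreal_smul, ← withDensity_const]
    refine withDensity_mono (hM.mono fun y hy => ENNReal.ofReal_le_ofReal ?_)
    gcongr Real.exp (?_ / 2)
    exact sq_le_sq' (abs_le.1 hy).1 (abs_le.1 hy).2
  have : IsFiniteMeasure ν₁ := isFiniteMeasure_of_le _ hle
  obtain ⟨K₁, hK₁⟩ := hμ.lintegral_lintegral_gaussianReal_mul_le hL
  obtain ⟨K₂, hK₂⟩ := (hν.of_le_smul hle).lintegral_sq_enorm_charFun_gaussianReal_le
  refine ⟨K₁ * (K₂ * 2 ^ (-t)), fun ξ hξ => ?_⟩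
  have hξ0 : ‖ξ‖₊ ≠ 0 := nnnorm_ne_zero_iff.2 (abs_pos.1 (one_pos.trans_le hξ))
  calc ∫⁻ a, ‖charFun ν (a * ξ)‖ₑ ^ 2 ∂μ
      ≤ ∫⁻ a, ∫⁻ u, ‖charFun ν₁ u‖ₑ ^ 2 ∂gaussianReal (a * ξ) 1 ∂μ :=
        lintegral_mono fun a => sq_enorm_charFun_le_lintegral_gaussianReal ν (a * ξ)
    _ ≤ K₁ * ‖ξ‖ₑ ^ (1 - s) * (K₂ * ((2 * ‖ξ‖₊ : ℝ≥0) : ℝ≥0∞) ^ (-t)) :=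
        (hK₁ ξ hξ _ (by fun_prop)).trans (mul_le_mul_right (hK₂ _ (by positivity)) _)
    _ = (K₁ * (K₂ * 2 ^ (-t)) : ℝ≥0) * ‖ξ‖ₑ ^ (1 - s - t) := by
        rw [sub_eq_add_neg (1 - s), ENNReal.rpow_add _ _ (by simpa using hξ0) enorm_ne_top,
          ← ENNReal.coe_rpow_of_ne_zero (by positivity), NNReal.mul_rpow, ENNReal.coe_mul,
          ENNReal.coe_rpow_of_ne_zero hξ0]
        push_cast
        rw [← enorm_eq_nnnorm]
        ring

end Dilates

section SquareIntegrability

theorem setLIntegral_closedBall_le_lintegral_gaussianReal {R : ℝ≥0} (hR : R ≠ 0) {f : ℝ → ℝ≥0∞}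
    (hf : Measurable f) :
    ∫⁻ x in closedBall 0 R, f x ≤
      ENNReal.ofReal (√(2 * Real.pi) * Real.exp (1 / 2)) * R *
        ∫⁻ x, f x ∂gaussianReal 0 (R ^ 2) := by
  have hpdf {x : ℝ} (hx : x ∈ closedBall (0 : ℝ) R) :
      1 ≤ ENNReal.ofReal (√(2 * Real.pi) * Real.exp (1 / 2)) * R * gaussianPDF 0 (R ^ 2) x := by
    have : (0 : ℝ) < R := NNReal.coe_pos.2 hR.bot_lt
    have hx' : x ^ 2 / (2 * R ^ 2) ≤ 1 / 2 := by
      rw [div_le_iff₀ (by positivity), ← sq_abs]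
      have := pow_le_pow_left₀ (abs_nonneg x) (by simpa using hx) 2
      linarith
    have heq : √(2 * Real.pi) * Real.exp (1 / 2) * R * gaussianPDFReal 0 (R ^ 2) x
        = Real.exp (1 / 2 - x ^ 2 / (2 * R ^ 2)) := by
      rw [gaussianPDFReal, Real.sqrt_mul (by positivity) ((R ^ 2 : ℝ≥0) : ℝ), NNReal.coe_pow,
        Real.sqrt_sq R.coe_nonneg, sub_zero, sub_eq_add_neg, Real.exp_add, neg_div]
      field_simp
    rw [gaussianPDF, ← ENNReal.ofReal_coe_nnreal, ← ENNReal.ofReal_mul (by positivity),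
      ← ENNReal.ofReal_mul (by positivity), heq, ENNReal.one_le_ofReal, Real.one_le_exp_iff]
    linarith
  calc ∫⁻ x in closedBall 0 R, f x
      ≤ ∫⁻ x in closedBall 0 R, ENNReal.ofReal (√(2 * Real.pi) * Real.exp (1 / 2)) * R *
          (gaussianPDF 0 (R ^ 2) x * f x) := by
        refine setLIntegral_mono' measurableSet_closedBall fun x hx => ?_
        rw [← mul_assoc]
        exact le_mul_of_one_le_left zero_le (hpdf hx)
    _ ≤ ∫⁻ x, ENNReal.ofReal (√(2 * Real.pi) * Real.exp (1 / 2)) * R *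
          (gaussianPDF 0 (R ^ 2) x * f x) := setLIntegral_le_lintegral _ _
    _ = _ := by
        rw [lintegral_const_mul _ (by fun_prop), lintegral_gaussianReal _ (by positivity) hf]

theorem IsFrostman.setLIntegral_sq_enorm_charFun_const_mul_le {τ : Measure ℝ} [IsFiniteMeasure τ]
    {s : ℝ} (hτ : IsFrostman τ s) :
    ∃ K : ℝ≥0, ∀ R : ℝ≥0, R ≠ 0 → ∀ a : ℝ, a ≠ 0 →
      ∫⁻ ξ in closedBall 0 R, ‖charFun τ (a * ξ)‖ₑ ^ 2 ≤ K * R * (‖a‖ₑ * R) ^ (-s) := by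
  obtain ⟨K, hK⟩ := hτ.lintegral_sq_enorm_charFun_gaussianReal_le
  refine ⟨(√(2 * Real.pi) * Real.exp (1 / 2)).toNNReal * K, fun R hR a ha => ?_⟩
  have ha' : ‖a‖₊ ≠ 0 := nnnorm_ne_zero_iff.2 ha
  have hmap : (gaussianReal 0 (R ^ 2)).map (a * ·) = gaussianReal 0 ((‖a‖₊ * R) ^ 2) := by
    rw [gaussianReal_map_const_mul, mul_zero]
    congr 1
    ext
    simp [mul_pow]
  calc ∫⁻ ξ in closedBall 0 R, ‖charFun τ (a * ξ)‖ₑ ^ 2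
      ≤ ENNReal.ofReal (√(2 * Real.pi) * Real.exp (1 / 2)) * R *
          ∫⁻ ξ, ‖charFun τ (a * ξ)‖ₑ ^ 2 ∂gaussianReal 0 (R ^ 2) :=
        setLIntegral_closedBall_le_lintegral_gaussianReal hR (by fun_prop)
    _ = ENNReal.ofReal (√(2 * Real.pi) * Real.exp (1 / 2)) * R *
          ∫⁻ u, ‖charFun τ u‖ₑ ^ 2 ∂gaussianReal 0 ((‖a‖₊ * R) ^ 2) := by
        rw [← hmap, lintegral_map (by fun_prop) (by fun_prop)]
    _ ≤ ENNReal.ofReal (√(2 * Real.pi) * Real.exp (1 / 2)) * R *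
          (K * ((‖a‖₊ * R : ℝ≥0) : ℝ≥0∞) ^ (-s)) := by
        gcongr
        exact hK _ (by positivity)
    _ = ((√(2 * Real.pi) * Real.exp (1 / 2)).toNNReal * K : ℝ≥0) * R * (‖a‖ₑ * R) ^ (-s) := by
        rw [ENNReal.coe_mul, ENNReal.coe_mul, ENNReal.ofReal, enorm_eq_nnnorm]
        ring

theorem IsFrostman.setLIntegral_sq_enorm_charFun_mul_le {μ τ : Measure ℝ} [IsFiniteMeasure μ]
    [IsFiniteMeasure τ] {s : ℝ} (hs : 0 ≤ s) (hτ : IsFrostman τ s) {δ : ℝ} (hδ : 0 < δ)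
    (hμ : ∀ᵐ a ∂μ, δ ≤ |a|) :
    ∃ K : ℝ≥0, ∀ R : ℝ≥0, R ≠ 0 →
      ∫⁻ ξ in closedBall 0 R, ∫⁻ a, ‖charFun τ (a * ξ)‖ₑ ^ 2 ∂μ ≤ K * (R : ℝ≥0∞) ^ (1 - s) := by
  obtain ⟨K, hK⟩ := hτ.setLIntegral_sq_enorm_charFun_const_mul_le
  lift δ to ℝ≥0 using hδ.le
  have hδ0 : δ ≠ 0 := by exact_mod_cast hδ.ne'
  refine ⟨K * δ ^ (-s) * (μ univ).toNNReal, fun R hR => ?_⟩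
  calc ∫⁻ ξ in closedBall 0 R, ∫⁻ a, ‖charFun τ (a * ξ)‖ₑ ^ 2 ∂μ
      = ∫⁻ a, ∫⁻ ξ in closedBall 0 R, ‖charFun τ (a * ξ)‖ₑ ^ 2 ∂volume ∂μ :=
        lintegral_lintegral_swap (by fun_prop)
    _ ≤ ∫⁻ _, K * R * (δ * R) ^ (-s) ∂μ := by
        refine lintegral_mono_ae (hμ.mono fun a ha => ?_)
        refine (hK R hR a (abs_pos.1 (hδ.trans_le ha))).trans ?_
        have hδa : (δ : ℝ≥0∞) ≤ ‖a‖ₑ := ENNReal.coe_le_coe.2 ha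
        rw [ENNReal.rpow_neg, ENNReal.rpow_neg]
        gcongr
    _ = (K * δ ^ (-s) * (μ univ).toNNReal : ℝ≥0) * (R : ℝ≥0∞) ^ (1 - s) := by
        have hR0 : (R : ℝ≥0∞) ≠ 0 := ENNReal.coe_ne_zero.2 hR
        rw [lintegral_const, sub_eq_add_neg, ENNReal.rpow_add _ _ hR0 ENNReal.coe_ne_top,
          ENNReal.rpow_one, ENNReal.mul_rpow_of_ne_top ENNReal.coe_ne_top ENNReal.coe_ne_top]
        push_cast
        rw [ENNReal.coe_toNNReal (measure_ne_top _ _), ENNReal.coe_rpow_of_ne_zero hδ0]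
        ring

theorem rpow_enorm_le_tsum {E : Type*} [SeminormedAddCommGroup E] (p : ℝ) {x : E}
    (hx : 1 ≤ ‖x‖) :
    ‖x‖ₑ ^ p ≤ ∑' n : ℕ, (closedBall 0 (2 ^ (n + 1) : ℝ≥0)).indicator
      (fun _ => (1 + 2 ^ p) * ((2 : ℝ≥0∞) ^ p) ^ n) x := by
  obtain ⟨n, hn, hn'⟩ := exists_nat_pow_near hx one_lt_two
  have hmem : x ∈ closedBall 0 (2 ^ (n + 1) : ℝ≥0) := by simpa using hn'.le
  have hlower : (2 : ℝ≥0∞) ^ n ≤ ‖x‖ₑ := by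
    simpa [← ofReal_norm] using ENNReal.ofReal_le_ofReal hn
  have hupper : ‖x‖ₑ ≤ 2 ^ (n + 1) := by
    simpa [← ofReal_norm] using ENNReal.ofReal_le_ofReal hn'.le
  have hpow (k : ℕ) : ((2 : ℝ≥0∞) ^ k) ^ p = (2 ^ p) ^ k := by
    rw [← ENNReal.rpow_natCast_mul, mul_comm, ENNReal.rpow_mul_natCast]
  calc ‖x‖ₑ ^ p ≤ (1 + 2 ^ p) * ((2 : ℝ≥0∞) ^ p) ^ n := by
        rw [one_add_mul, ← pow_succ', ← hpow, ← hpow]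
        rcases le_total 0 p with hp | hp
        · exact (ENNReal.rpow_le_rpow hupper hp).trans le_add_self
        · refine le_trans ?_ le_self_add
          simpa [ENNReal.rpow_neg] using ENNReal.rpow_le_rpow hlower (neg_nonneg.2 hp)
    _ = (closedBall 0 (2 ^ (n + 1) : ℝ≥0)).indicator
          (fun _ => (1 + 2 ^ p) * ((2 : ℝ≥0∞) ^ p) ^ n) x :=
        (indicator_of_mem hmem fun _ => _).symm
    _ ≤ _ := ENNReal.le_tsum (f := fun n : ℕ => (closedBall 0 (2 ^ (n + 1) : ℝ≥0)).indicator
          (fun _ => (1 + 2 ^ p) * ((2 : ℝ≥0∞) ^ p) ^ n) x) n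

theorem setLIntegral_rpow_enorm_lt_top {E : Type*} [NormedAddCommGroup E] [MeasurableSpace E]
    [OpensMeasurableSpace E] {κ : Measure E} {K : ℝ≥0} {p q : ℝ}
    (hκ : ∀ R : ℝ≥0, R ≠ 0 → κ (closedBall 0 R) ≤ K * (R : ℝ≥0∞) ^ q) (hpq : p + q < 0) :
    ∫⁻ x in {x | 1 ≤ ‖x‖}, ‖x‖ₑ ^ p ∂κ < ∞ := by
  have hball (n : ℕ) : (1 + 2 ^ p) * ((2 : ℝ≥0∞) ^ p) ^ n * κ (closedBall 0 (2 ^ (n + 1) : ℝ≥0))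
      ≤ (1 + 2 ^ p) * (K * 2 ^ q) * ((2 : ℝ≥0∞) ^ (p + q)) ^ n := by
    grw [hκ _ (by positivity)]
    rw [ENNReal.rpow_add _ _ two_ne_zero ENNReal.ofNat_ne_top, ENNReal.coe_pow, ENNReal.coe_ofNat,
      ← ENNReal.rpow_natCast_mul, mul_comm _ q, ENNReal.rpow_mul_natCast]
    exact le_of_eq (by ring)
  have hratio : (2 : ℝ≥0∞) ^ (p + q) < 1 :=
    ENNReal.rpow_lt_one_of_one_lt_of_neg ENNReal.one_lt_two hpq
  have htwo (r : ℝ) : (2 : ℝ≥0∞) ^ r < ∞ :=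
    (ENNReal.rpow_ne_top_of_ne_zero two_ne_zero ENNReal.ofNat_ne_top).lt_top
  calc ∫⁻ x in {x | 1 ≤ ‖x‖}, ‖x‖ₑ ^ p ∂κ
      ≤ ∫⁻ x, ∑' n : ℕ, (closedBall 0 (2 ^ (n + 1) : ℝ≥0)).indicator
          (fun _ => (1 + 2 ^ p) * ((2 : ℝ≥0∞) ^ p) ^ n) x ∂κ :=
        (setLIntegral_mono' (measurableSet_le measurable_const measurable_norm)
          fun x hx => rpow_enorm_le_tsum p hx).trans (setLIntegral_le_lintegral _ _)
    _ = ∑' n : ℕ, (1 + 2 ^ p) * ((2 : ℝ≥0∞) ^ p) ^ n * κ (closedBall 0 (2 ^ (n + 1) : ℝ≥0)) := by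
        rw [lintegral_tsum fun n =>
          (measurable_const.indicator measurableSet_closedBall).aemeasurable]
        simp only [lintegral_indicator_const measurableSet_closedBall]
    _ ≤ ∑' n : ℕ, (1 + 2 ^ p) * (K * 2 ^ q) * ((2 : ℝ≥0∞) ^ (p + q)) ^ n :=
        ENNReal.tsum_le_tsum hball
    _ < ∞ := by
        rw [ENNReal.tsum_mul_left, ENNReal.tsum_geometric]
        exact ENNReal.mul_lt_top
          (ENNReal.mul_lt_top (ENNReal.add_lt_top.2 ⟨ENNReal.one_lt_top, htwo p⟩)
            (ENNReal.mul_lt_top ENNReal.coe_lt_top (htwo q)))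
          (ENNReal.inv_lt_top.2 (tsub_pos_of_lt hratio))

theorem charFun_mconv (μ κ : Measure ℝ) [IsFiniteMeasure μ] [IsFiniteMeasure κ] (ξ : ℝ) :
    charFun (μ ∗ₘ κ) ξ = ∫ a, charFun κ (a * ξ) ∂μ := by
  simp only [charFun_apply_real]
  rw [Measure.mconv, integral_map (by fun_prop) (by fun_prop), integral_prod]
  · refine integral_congr_ae (ae_of_all _ fun a => integral_congr_ae (ae_of_all _ fun x => ?_))
    push_cast
    ring_nf
  · refine .of_bound (by fun_prop) 1 (ae_of_all _ fun p => ?_)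
    rw [← Complex.ofReal_mul, Complex.norm_exp_ofReal_mul_I]

theorem sq_enorm_charFun_mconv_conv_le (μ ν τ : Measure ℝ) [IsFiniteMeasure μ] [IsFiniteMeasure ν]
    [IsFiniteMeasure τ] (ξ : ℝ) :
    ‖charFun (μ ∗ₘ (ν ∗ τ)) ξ‖ₑ ^ 2 ≤
      (∫⁻ a, ‖charFun ν (a * ξ)‖ₑ ^ 2 ∂μ) * ∫⁻ a, ‖charFun τ (a * ξ)‖ₑ ^ 2 ∂μ := by
  simp only [charFun_mconv, charFun_conv]
  calc ‖∫ a, charFun ν (a * ξ) * charFun τ (a * ξ) ∂μ‖ₑ ^ 2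
      ≤ (∫⁻ a, ‖charFun ν (a * ξ)‖ₑ * ‖charFun τ (a * ξ)‖ₑ ∂μ) ^ 2 := by
        grw [enorm_integral_le_lintegral_enorm]
        simp only [enorm_mul, le_refl]
    _ ≤ _ := sq_lintegral_mul_le (by fun_prop) (by fun_prop)

theorem setLIntegral_sq_enorm_charFun_lt_top (κ : Measure ℝ) [IsFiniteMeasure κ]
    {s : Set ℝ} (hs : volume s ≠ ∞) : ∫⁻ ξ in s, ‖charFun κ ξ‖ₑ ^ 2 < ∞ := by
  refine setLIntegral_lt_top_of_le_nnreal hs ⟨‖κ.real univ‖₊ ^ 2, fun ξ _ => ?_⟩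
  push_cast
  gcongr
  rw [← enorm_eq_nnnorm, enorm_le_iff_norm_le, Real.norm_of_nonneg measureReal_nonneg]
  exact norm_charFun_le ξ

theorem lintegral_sq_enorm_charFun_mconv_conv_lt_top {μ ν τ : Measure ℝ} [IsFiniteMeasure μ]
    [IsFiniteMeasure ν] [IsFiniteMeasure τ] {α β γ : ℝ} (hμ : IsFrostman μ α)
    (hν : IsFrostman ν β) (hτ : IsFrostman τ γ) (hγ : 0 ≤ γ) (hsum : 2 < α + β + γ)
    {δ L M : ℝ} (hδ : 0 < δ) (hμδ : ∀ᵐ a ∂μ, δ ≤ |a|) (hμL : ∀ᵐ a ∂μ, |a| ≤ L)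
    (hνM : ∀ᵐ b ∂ν, |b| ≤ M) :
    ∫⁻ ξ, ‖charFun (μ ∗ₘ (ν ∗ τ)) ξ‖ₑ ^ 2 < ∞ := by
  set Q : ℝ → ℝ≥0∞ := fun ξ => ∫⁻ a, ‖charFun τ (a * ξ)‖ₑ ^ 2 ∂μ
  have hS : MeasurableSet {ξ : ℝ | 1 ≤ ‖ξ‖} := measurableSet_le measurable_const measurable_norm
  have hQ : Measurable Q := Measurable.lintegral_prod_right'
    (f := fun p : ℝ × ℝ => ‖charFun τ (p.2 * p.1)‖ₑ ^ 2) (by fun_prop)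
  obtain ⟨K, hK⟩ := hμ.lintegral_sq_enorm_charFun_mul_le hν hμL hνM
  obtain ⟨K', hK'⟩ := hτ.setLIntegral_sq_enorm_charFun_mul_le hγ hδ hμδ
  have hmass (R : ℝ≥0) (hR : R ≠ 0) :
      volume.withDensity Q (closedBall 0 R) ≤ K' * (R : ℝ≥0∞) ^ (1 - γ) := by
    rw [withDensity_apply _ measurableSet_closedBall]
    exact hK' R hR
  have hfar : ∫⁻ ξ in {ξ | 1 ≤ ‖ξ‖}, ‖charFun (μ ∗ₘ (ν ∗ τ)) ξ‖ₑ ^ 2 < ∞ := by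
    calc ∫⁻ ξ in {ξ | 1 ≤ ‖ξ‖}, ‖charFun (μ ∗ₘ (ν ∗ τ)) ξ‖ₑ ^ 2
        ≤ ∫⁻ ξ in {ξ | 1 ≤ ‖ξ‖}, K * (Q ξ * ‖ξ‖ₑ ^ (1 - α - β)) :=
          setLIntegral_mono' hS fun ξ hξ => (sq_enorm_charFun_mconv_conv_le μ ν τ ξ).trans
            ((mul_le_mul_left (hK ξ hξ) _).trans_eq (by ring))
      _ = K * ∫⁻ ξ in {ξ | 1 ≤ ‖ξ‖}, ‖ξ‖ₑ ^ (1 - α - β) ∂volume.withDensity Q := by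
          rw [lintegral_const_mul _ (by fun_prop),
            setLIntegral_withDensity_eq_setLIntegral_mul _ hQ (by fun_prop) hS]
          rfl
      _ < ∞ := ENNReal.mul_lt_top ENNReal.coe_lt_top
          (setLIntegral_rpow_enorm_lt_top hmass (by linarith))
  have hcompl : {ξ : ℝ | 1 ≤ ‖ξ‖}ᶜ = ball 0 1 := by
    ext
    simp
  rw [← lintegral_add_compl _ hS, hcompl]
  exact ENNReal.add_lt_top.2
    ⟨hfar, setLIntegral_sq_enorm_charFun_lt_top _ measure_ball_lt_top.ne⟩

end SquareIntegrability

section AbsoluteContinuity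

variable {E : Type*} [NormedAddCommGroup E] [ProperSpace E] [MeasurableSpace E] [BorelSpace E]

theorem lintegral_measure_closedBall (m ν : Measure E) [m.IsAddHaarMeasure] [SFinite ν] (r : ℝ) :
    ∫⁻ x, ν (closedBall x r) ∂m = ν univ * m (closedBall 0 r) := by
  have hmeas : MeasurableSet {p : E × E | dist p.2 p.1 ≤ r} :=
    measurableSet_le (by fun_prop) measurable_const
  calc ∫⁻ x, ν (closedBall x r) ∂m = (m.prod ν) {p | dist p.2 p.1 ≤ r} :=
        (Measure.prod_apply hmeas).symm
    _ = ∫⁻ y, m (closedBall y r) ∂ν := by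
        rw [Measure.prod_apply_symm hmeas]
        simp only [preimage_ofPred_eq, dist_comm, closedBall]
    _ = ν univ * m (closedBall 0 r) := by
        simp only [Measure.addHaar_closedBall_center, lintegral_const, mul_comm]

theorem lintegral_sq_measure_closedBall_le (m ν : Measure E) [m.IsAddHaarMeasure] [SFinite ν]
    (r : ℝ) :
    ∫⁻ x, ν (closedBall x r) ^ 2 ∂m ≤
      (ν.prod ν) {p | dist p.1 p.2 ≤ 2 * r} * m (closedBall 0 r) := by
  have hmeas : MeasurableSet {q : E × E × E | dist q.2.1 q.1 ≤ r ∧ dist q.2.2 q.1 ≤ r} := by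
    rw [ofPred_and]
    exact (measurableSet_le (by fun_prop) measurable_const).inter
      (measurableSet_le (by fun_prop) measurable_const)
  have hD : MeasurableSet {p : E × E | dist p.1 p.2 ≤ 2 * r} :=
    measurableSet_le measurable_dist measurable_const
  calc ∫⁻ x, ν (closedBall x r) ^ 2 ∂m
      = ∫⁻ x, (ν.prod ν) (closedBall x r ×ˢ closedBall x r) ∂m := by
        simp only [Measure.prod_prod, sq]
    _ = ∫⁻ p, m (closedBall p.1 r ∩ closedBall p.2 r) ∂ν.prod ν := by
        refine ((Measure.prod_apply hmeas).symm.trans (Measure.prod_apply_symm hmeas)).trans ?_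
        refine lintegral_congr fun p => congrArg m ?_
        ext x
        simp only [mem_preimage, mem_ofPred_eq, mem_inter_iff, mem_closedBall']
    _ ≤ ∫⁻ p, {p : E × E | dist p.1 p.2 ≤ 2 * r}.indicator
          (fun _ => m (closedBall 0 r)) p ∂ν.prod ν := by
        refine lintegral_mono fun p => ?_
        by_cases hp : p ∈ {p : E × E | dist p.1 p.2 ≤ 2 * r}
        · rw [indicator_of_mem hp, ← Measure.addHaar_closedBall_center m p.1 r]
          exact measure_mono inter_subset_left
        · rw [(closedBall_disjoint_closedBall (by simpa [two_mul] using hp)).inter_eq,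
            measure_empty]
          exact zero_le
    _ = _ := by rw [lintegral_indicator_const hD, mul_comm]

-- Cauchy–Schwarz for the function `x ↦ ν (T ∩ closedBall x r)`, which lives on `cthickening r T`.
theorem sq_measure_mul_measure_closedBall_le (m ν : Measure E) [m.IsAddHaarMeasure] [SFinite ν]
    {r : ℝ} (hr : 0 < r) (T : Set E) :
    ν T ^ 2 * m (closedBall 0 r) ≤
      m (cthickening r T) * (ν.prod ν) {p | dist p.1 p.2 ≤ 2 * r} := by
  have hsupp (x : E) : ν.restrict T (closedBall x r) =
      (cthickening r T).indicator 1 x * ν.restrict T (closedBall x r) := by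
    by_cases hx : x ∈ cthickening r T
    · rw [indicator_of_mem hx, Pi.one_apply, one_mul]
    · have hdisj : closedBall x r ∩ T = ∅ := eq_empty_of_forall_notMem fun y hy =>
        hx (mem_cthickening_of_dist_le x y r T hy.2 (mem_closedBall'.1 hy.1))
      rw [Measure.restrict_apply measurableSet_closedBall, hdisj, measure_empty, mul_zero]
  have hmeas : Measurable fun x => ν.restrict T (closedBall x r) :=
    measurable_measure_prodMk_left (s := {p : E × E | dist p.2 p.1 ≤ r})
      (measurableSet_le (by fun_prop) measurable_const)
  have hcth : MeasurableSet (cthickening r T) := isClosed_cthickening.measurableSet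
  have hB : m (closedBall 0 r) ≠ 0 := (measure_closedBall_pos m 0 hr).ne'
  have hB' : m (closedBall 0 r) ≠ ∞ := measure_closedBall_lt_top.ne
  refine (ENNReal.mul_le_mul_iff_left hB hB').1 ?_
  calc ν T ^ 2 * m (closedBall 0 r) * m (closedBall 0 r)
      = (∫⁻ x, ν.restrict T (closedBall x r) ∂m) ^ 2 := by
        rw [lintegral_measure_closedBall, Measure.restrict_apply_univ]
        ring
    _ = (∫⁻ x, (cthickening r T).indicator 1 x * ν.restrict T (closedBall x r) ∂m) ^ 2 := by
        simp only [← hsupp]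
    _ ≤ (∫⁻ x, (cthickening r T).indicator 1 x ^ 2 ∂m) *
          ∫⁻ x, ν.restrict T (closedBall x r) ^ 2 ∂m :=
        sq_lintegral_mul_le (measurable_one.indicator hcth).aemeasurable hmeas.aemeasurable
    _ ≤ m (cthickening r T) *
          ((ν.prod ν) {p | dist p.1 p.2 ≤ 2 * r} * m (closedBall 0 r)) := by
        gcongr
        · have hsq (x : E) : (cthickening r T).indicator (1 : E → ℝ≥0∞) x ^ 2 =
              (cthickening r T).indicator 1 x := by
            by_cases hx : x ∈ cthickening r T <;> simp [hx]
          simp only [hsq, lintegral_indicator_one hcth, le_refl]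
        · refine (lintegral_sq_measure_closedBall_le m _ r).trans ?_
          gcongr <;> exact Measure.restrict_le_self
    _ = _ := (mul_assoc _ _ _).symm

theorem absolutelyContinuous_of_prod_dist_le {m ν : Measure E} [m.IsAddHaarMeasure]
    [IsFiniteMeasure ν] {C : ℝ≥0∞} (hC : C ≠ ∞)
    (h : ∀ r : ℝ, 0 < r → (ν.prod ν) {p | dist p.1 p.2 ≤ 2 * r} ≤ C * m (closedBall 0 r)) :
    ν ≪ m := by
  refine Measure.AbsolutelyContinuous.mk fun s hs hms => ?_
  rw [hs.measure_eq_iSup_isCompact_of_ne_top (measure_ne_top ν s)]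
  simp only [ENNReal.iSup_eq_zero]
  intro T hTs hT
  have hbound (r : ℝ) (hr : 0 < r) : ν T ^ 2 ≤ m (cthickening r T) * C := by
    refine (ENNReal.mul_le_mul_iff_left (measure_closedBall_pos m 0 hr).ne'
      measure_closedBall_lt_top.ne).1 ((sq_measure_mul_measure_closedBall_le m ν hr T).trans ?_)
    grw [h r hr, mul_assoc]
  have hlim : Tendsto (fun r => m (cthickening r T) * C) (𝓝[>] 0) (𝓝 0) := by
    have := ENNReal.Tendsto.mul_const (b := C) ((tendsto_measure_cthickening_of_isCompact
      (μ := m) hT).mono_left (nhdsWithin_le_nhds (s := Ioi 0))) (.inr hC)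
    rwa [measure_mono_null hTs hms, zero_mul] at this
  exact pow_eq_zero_iff two_ne_zero |>.1 (nonpos_iff_eq_zero.1
    (ge_of_tendsto hlim (eventually_mem_nhdsWithin.mono hbound)))

theorem gaussianPDFReal_le (m : ℝ) (v : ℝ≥0) (x : ℝ) : gaussianPDFReal m v x ≤ (√v)⁻¹ := by
  rcases eq_or_ne v 0 with rfl | hv
  · simp
  have : (0 : ℝ) < v := NNReal.coe_pos.2 hv.bot_lt
  have hπ : (v : ℝ) ≤ 2 * Real.pi * v :=
    le_mul_of_one_le_left v.coe_nonneg (by linarith [Real.two_le_pi])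
  calc gaussianPDFReal m v x
      ≤ (√(2 * Real.pi * v))⁻¹ * 1 := by
        rw [gaussianPDFReal]
        gcongr
        rw [Real.exp_le_one_iff, neg_div]
        exact neg_nonpos.2 (by positivity)
    _ ≤ (√v)⁻¹ := by
        rw [mul_one]
        gcongr

theorem lintegral_gaussianReal_le (m : ℝ) {v : ℝ≥0} (hv : v ≠ 0) {f : ℝ → ℝ≥0∞}
    (hf : Measurable f) :
    ∫⁻ x, f x ∂gaussianReal m v ≤ ENNReal.ofReal (√v)⁻¹ * ∫⁻ x, f x := by
  rw [lintegral_gaussianReal m hv hf, ← lintegral_const_mul _ hf]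
  gcongr with x
  exact ENNReal.ofReal_le_ofReal (gaussianPDFReal_le m v x)

theorem prod_dist_le_le_lintegral_sq_enorm_charFun (ν : Measure ℝ) [IsFiniteMeasure ν] {r : ℝ}
    (hr : 0 < r) :
    (ν.prod ν) {p | dist p.1 p.2 ≤ r} ≤
      ENNReal.ofReal (Real.exp (1 / 2) * r) * ∫⁻ ξ, ‖charFun ν ξ‖ₑ ^ 2 := by
  lift r to ℝ≥0 using hr.le
  have hr0 : r ≠ 0 := (NNReal.coe_pos.1 hr).ne'
  have hD : MeasurableSet {p : ℝ × ℝ | dist p.1 p.2 ≤ r} :=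
    measurableSet_le measurable_dist measurable_const
  have hexp (p : ℝ × ℝ) : {p : ℝ × ℝ | dist p.1 p.2 ≤ r}.indicator 1 p ≤
      ENNReal.ofReal (Real.exp (1 / 2)) *
        ENNReal.ofReal (Real.exp (-((r⁻¹ ^ 2 : ℝ≥0) * (p.1 - p.2) ^ 2) / 2)) := by
    refine indicator_apply_le' (fun hp => ?_) fun _ => zero_le
    have hdist : |p.1 - p.2| ≤ r := hp
    have hsq : (p.1 - p.2) ^ 2 ≤ (r : ℝ) ^ 2 := sq_le_sq' (abs_le.1 hdist).1 (abs_le.1 hdist).2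
    rw [Pi.one_apply, ← ENNReal.ofReal_mul (Real.exp_nonneg _), ← Real.exp_add,
      ENNReal.one_le_ofReal, Real.one_le_exp_iff]
    push_cast
    have : (r : ℝ)⁻¹ ^ 2 * (p.1 - p.2) ^ 2 ≤ 1 := by
      rw [inv_pow, inv_mul_le_one₀ (by positivity)]
      exact hsq
    linarith
  calc (ν.prod ν) {p | dist p.1 p.2 ≤ r}
      = ∫⁻ p, {p : ℝ × ℝ | dist p.1 p.2 ≤ r}.indicator 1 p ∂ν.prod ν :=
        (lintegral_indicator_one hD).symm
    _ ≤ ∫⁻ p, ENNReal.ofReal (Real.exp (1 / 2)) *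
          ENNReal.ofReal (Real.exp (-((r⁻¹ ^ 2 : ℝ≥0) * (p.1 - p.2) ^ 2) / 2)) ∂ν.prod ν :=
        lintegral_mono hexp
    _ = ENNReal.ofReal (Real.exp (1 / 2)) *
          ∫⁻ ξ, ‖charFun ν ξ‖ₑ ^ 2 ∂gaussianReal 0 (r⁻¹ ^ 2) := by
        rw [lintegral_const_mul _ (by fun_prop), lintegral_prod _ (by fun_prop),
          lintegral_sq_enorm_charFun_gaussianReal]
    _ ≤ ENNReal.ofReal (Real.exp (1 / 2)) * (ENNReal.ofReal r * ∫⁻ ξ, ‖charFun ν ξ‖ₑ ^ 2) := by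
        gcongr
        refine (lintegral_gaussianReal_le 0 (pow_ne_zero 2 (inv_ne_zero hr0)) ?_).trans_eq ?_
        · fun_prop
        · simp
    _ = _ := by rw [← mul_assoc, ENNReal.ofReal_mul (Real.exp_nonneg _)]

theorem absolutelyContinuous_of_lintegral_sq_enorm_charFun_lt_top {ν : Measure ℝ}
    [IsFiniteMeasure ν] (h : ∫⁻ ξ, ‖charFun ν ξ‖ₑ ^ 2 < ∞) : ν ≪ volume := by
  refine absolutelyContinuous_of_prod_dist_le
    (ENNReal.mul_lt_top (ENNReal.ofReal_lt_top (r := Real.exp (1 / 2))) h).ne fun r hr => ?_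
  refine (prod_dist_le_le_lintegral_sq_enorm_charFun ν (by positivity)).trans_eq ?_
  rw [Real.volume_closedBall, ENNReal.ofReal_mul (Real.exp_nonneg _)]
  ring

end AbsoluteContinuity

section Support

@[to_additive]
theorem ae_mem_mul_mconv {M : Type*} [Monoid M] [MeasurableSpace M] [MeasurableMul₂ M]
    {μ ν : Measure M} [SFinite ν] {s t : Set M} (hst : MeasurableSet (s * t))
    (hs : ∀ᵐ x ∂μ, x ∈ s) (ht : ∀ᵐ y ∂ν, y ∈ t) : ∀ᵐ z ∂(μ ∗ₘ ν), z ∈ s * t := by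
  refine (ae_map_iff (by fun_prop) hst).2 ?_
  filter_upwards [Measure.quasiMeasurePreserving_fst.ae hs,
    Measure.quasiMeasurePreserving_snd.ae ht] with p hp hq using mul_mem_mul hp hq

@[to_additive]
theorem mconv_ne_zero {M : Type*} [Monoid M] [MeasurableSpace M] [MeasurableMul₂ M]
    {μ ν : Measure M} [SFinite ν] (hμ : μ ≠ 0) (hν : ν ≠ 0) : μ ∗ₘ ν ≠ 0 := by
  rw [Measure.mconv, ne_eq, Measure.map_eq_zero_iff (by fun_prop),
    ← Measure.measure_univ_eq_zero, ← univ_prod_univ, Measure.prod_prod, mul_eq_zero]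
  simpa using And.intro hμ hν

theorem measure_pos_of_absolutelyContinuous {X : Type*} [MeasurableSpace X] {μ m : Measure X}
    (hμm : μ ≪ m) (hμ : μ ≠ 0) {s : Set X} (hs : ∀ᵐ x ∂μ, x ∈ s) : 0 < m s := by
  have : (ae μ).NeBot := ae_neBot.2 hμ
  exact pos_iff_ne_zero.2 (mt (@hμm s) (frequently_ae_mem_iff.1 hs.frequently))

end Support

section DimensionChoice

theorem exists_lt_dimH_diff_ball {X : Type*} [MetricSpace X] {s : ℝ≥0∞} {K : Set X}
    (h : s < dimH K) (x : X) : ∃ δ > 0, s < dimH (K \ ball x δ) := by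
  have hcover : K ⊆ {x} ∪ ⋃ n : ℕ, K \ ball x (1 / (n + 1)) := fun y hy => by
    rcases eq_or_ne y x with rfl | hyx
    · exact .inl rfl
    · obtain ⟨n, hn⟩ := exists_nat_one_div_lt (dist_pos.2 hyx)
      exact .inr (mem_iUnion.2 ⟨n, hy, fun hlt => hn.not_gt hlt⟩)
  have hsup : s < ⨆ n : ℕ, dimH (K \ ball x (1 / (n + 1))) := by
    simpa only [dimH_union, dimH_singleton, dimH_iUnion, zero_le, max_eq_right]
      using h.trans_le (dimH_mono hcover)
  obtain ⟨n, hn⟩ := lt_iSup_iff.1 hsup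
  exact ⟨1 / (n + 1), by positivity, hn⟩

theorem exists_nnreal_lt_of_lt_add {a x y : ℝ≥0∞} (hyx : y ≤ x) (hy : y ≠ ∞) (h : x < a + y) :
    ∃ α : ℝ≥0, 0 < α ∧ α < a ∧ x < α + y := by
  obtain ⟨α, hlower, hupper⟩ :=
    ENNReal.lt_iff_exists_nnreal_btwn.1 (ENNReal.sub_lt_of_lt_add hyx h)
  exact ⟨α, ENNReal.coe_pos.1 (bot_le.trans_lt hlower), hupper,
    ENNReal.lt_add_of_sub_lt_right (.inr hy) hlower⟩

theorem exists_nnreal_lt_of_two_lt_add_add {a b c : ℝ≥0∞} (ha : a ≤ 1) (hb : b ≤ 1) (hc : c ≤ 1)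
    (h : 2 < a + b + c) :
    ∃ α β γ : ℝ≥0, 0 < α ∧ 0 < β ∧ 0 < γ ∧ α < a ∧ β < b ∧ γ < c ∧ 2 < α + β + γ := by
  have hle {x y : ℝ≥0∞} (hx : x ≤ 1) (hy : y ≤ 1) : x + y ≤ 2 :=
    (add_le_add hx hy).trans_eq one_add_one_eq_two
  have hne {x y : ℝ≥0∞} (hx : x ≤ 1) (hy : y ≤ 1) : x + y ≠ ∞ :=
    ne_top_of_le_ne_top ENNReal.ofNat_ne_top (hle hx hy)
  obtain ⟨α, hα, hαa, h⟩ := exists_nnreal_lt_of_lt_add (hle hb hc) (hne hb hc)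
    (h.trans_eq (add_assoc a b c))
  have hα1 := hαa.le.trans ha
  obtain ⟨β, hβ, hβb, h⟩ := exists_nnreal_lt_of_lt_add (hle hα1 hc) (hne hα1 hc)
    (h.trans_eq (add_left_comm _ b c))
  have hβ1 := hβb.le.trans hb
  obtain ⟨γ, hγ, hγc, h⟩ := exists_nnreal_lt_of_lt_add (hle hα1 hβ1) (hne hα1 hβ1)
    (h.trans_eq (by ring : _ = c + (α + β)))
  exact ⟨α, β, γ, hα, hβ, hγ, hαa, hβb, hγc,
    mod_cast h.trans_eq (add_comm _ _)⟩

end DimensionChoice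

/-- **Continuous sum-product estimate on the line** (Corollary 1.6 of "Group actions,
the Mattila integral and applications"). If `A, B, C ⊆ ℝ` are compact with
`dim_H(A) + dim_H(B) + dim_H(C) > 2`, then `A(B+C) = { a(b+c) : a ∈ A, b ∈ B, c ∈ C }`
has positive Lebesgue measure. -/
theorem sum_product_line_pos_measure
    (A B C : Set ℝ) (hA : IsCompact A) (hB : IsCompact B) (hC : IsCompact C)
    (hdim : 2 < dimH A + dimH B + dimH C) :
    0 < volume {t : ℝ | ∃ a ∈ A, ∃ b ∈ B, ∃ c ∈ C, t = a * (b + c)} := by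
  have hdim_le (S : Set ℝ) : dimH S ≤ 1 := (dimH_mono (subset_univ S)).trans_eq Real.dimH_univ
  obtain ⟨α, β, γ, hα, hβ, hγ, hαA, hβB, hγC, hsum⟩ :=
    exists_nnreal_lt_of_two_lt_add_add (hdim_le A) (hdim_le B) (hdim_le C) hdim
  obtain ⟨δ, hδ, hαδ⟩ := exists_lt_dimH_diff_ball hαA 0
  obtain ⟨μ, _, hμ0, hμA, hμ⟩ := exists_isFrostman_of_lt_dimH hα (hA.diff isOpen_ball) hαδ
  obtain ⟨ν, _, hν0, hνB, hν⟩ := exists_isFrostman_of_lt_dimH hβ hB hβB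
  obtain ⟨τ, _, hτ0, hτC, hτ⟩ := exists_isFrostman_of_lt_dimH hγ hC hγC
  obtain ⟨L, hL⟩ := hA.isBounded.exists_norm_le
  obtain ⟨M, hM⟩ := hB.isBounded.exists_norm_le
  have hac : μ ∗ₘ (ν ∗ τ) ≪ volume :=
    absolutelyContinuous_of_lintegral_sq_enorm_charFun_lt_top
      (lintegral_sq_enorm_charFun_mconv_conv_lt_top hμ hν hτ γ.coe_nonneg (mod_cast hsum) hδ
        (hμA.mono fun a ha => by simpa using ha.2) (hμA.mono fun a ha => hL a ha.1)
        (hνB.mono hM))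
  refine measure_pos_of_absolutelyContinuous hac (mconv_ne_zero hμ0 (conv_ne_zero hν0 hτ0)) ?_
  filter_upwards [ae_mem_mul_mconv (hA.mul (hB.add hC)).measurableSet
    (hμA.mono fun _ ha => ha.1) (ae_mem_add_conv (hB.add hC).measurableSet hνB hτC)]
  rintro _ ⟨a, ha, _, ⟨b, hb, c, hc, rfl⟩, rfl⟩
  exact ⟨a, ha, b, hb, c, hc, rfl⟩
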